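/- arXiv:1512.04307 — 9 statements merged into one kernel-verified Lean document; each statement's English description precedes it below -/
import Mathlib

section
/- Let β > 0 and let c ∈ (e^{-2/β}, 1). Set b = (1/2)βc(-ln c) and λ = 4βc²(-ln c)(1 + (1/2)β ln c). Then 0 < b < c, λ > 0, and the function θ(r) = -2 ln(c - b + b r²) satisfies the radial Gelfand equation θ''(r) + θ'(r)/r + λ e^{θ(r)} = 0 for all r ∈ (0, 1), together with the Robin boundary condition θ'(1) = -β θ(1). -/
/-!
With `u(r) = c - b + b r²`, one has `θ' = -4 b r / u` and `θ'' = (-4 b u + 8 b² r²) / u²`, so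
`θ'' + θ' / r = -8 b (c - b) / u²`, while `e^θ = u⁻²`. The Gelfand equation therefore holds exactly
when `λ = 8 b (c - b)`, which is what the given `b` and `λ` satisfy. Since `u(1) = c`, the Robin
condition reads `-4 b / c = 2 β ln c`, the definition of `b`. The bound `c > e^{-2/β}` says that
`1 + (β / 2) ln c > 0`, which gives `b < c` and `λ > 0`.
-/

open Real Set

/-- For β > 0 and c ∈ (e^{-2/β}, 1), with b = (1/2)βc(-ln c) and
λ = 4βc²(-ln c)(1 + (1/2)β ln c), we have 0 < b < c, λ > 0, and
θ(r) = -2 ln(c - b + b r²) solves the radial Gelfand equation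
θ'' + θ'/r + λ e^θ = 0 on (0,1) with Robin condition θ'(1) = -β θ(1). -/
theorem radial_steady_state_voltage
    (β c b lam : ℝ) (hβ : 0 < β)
    (hc : c ∈ Set.Ioo (Real.exp (-2 / β)) 1)
    (hb : b = β * c * (-Real.log c) / 2)
    (hlam : lam = 4 * β * c ^ 2 * (-Real.log c) * (1 + β * Real.log c / 2))
    (θ : ℝ → ℝ) (hθ : ∀ r : ℝ, θ r = -2 * Real.log (c - b + b * r ^ 2)) :
    0 < b ∧ b < c ∧ 0 < lam ∧
    (∀ r ∈ Set.Ioo (0 : ℝ) 1,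
      deriv (deriv θ) r + deriv θ r / r + lam * Real.exp (θ r) = 0) ∧
    deriv θ 1 = -β * θ 1 := by
  obtain ⟨hc1, hc2⟩ := hc
  have hc0 : 0 < c := (exp_pos _).trans hc1
  have hlog : log c < 0 := log_neg hc0 hc2
  have hfac : 0 < 1 + β * log c / 2 := by
    have h := (lt_log_iff_exp_lt hc0).2 hc1
    rw [div_lt_iff₀ hβ] at h
    linarith
  have hb0 : 0 < b := by
    rw [hb]
    have := mul_pos (mul_pos hβ hc0) (neg_pos.2 hlog)
    linarith
  have hcb : c - b = c * (1 + β * log c / 2) := by rw [hb]; ring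
  have hbc : 0 < c - b := hcb ▸ mul_pos hc0 hfac
  have hlam' : lam = 8 * b * (c - b) := by rw [hcb, hlam, hb]; ring
  have hu : ∀ r : ℝ, 0 < c - b + b * r ^ 2 := fun r => by positivity
  have hu' : ∀ r : ℝ, HasDerivAt (fun r : ℝ => c - b + b * r ^ 2) (2 * b * r) r := fun r => by
    refine (((hasDerivAt_pow 2 r).const_mul b).const_add (c - b)).congr_deriv ?_
    push_cast
    ring
  have hθ' : deriv θ = fun r => -4 * b * r / (c - b + b * r ^ 2) := by
    funext r
    rw [funext hθ, (((hu' r).log (hu r).ne').const_mul (-2)).deriv]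
    ring
  refine ⟨hb0, sub_pos.1 hbc, ?_, ?_, ?_⟩
  · rw [hlam']
    positivity
  · rintro r ⟨hr, -⟩
    have hne := (hu r).ne'
    have hexp : exp (θ r) = ((c - b + b * r ^ 2) ^ 2)⁻¹ := by
      rw [hθ, neg_mul, exp_neg, ← Nat.cast_ofNat, exp_nat_mul, exp_log (hu r)]
    rw [hexp, hθ', (((hasDerivAt_id' r).const_mul (-4 * b)).fun_div (hu' r) hne).deriv, hlam']
    field_simp
    ring
  · have h1 : c - b + b * (1 : ℝ) ^ 2 = c := by ring
    simp only [hθ', hθ, h1]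
    rw [div_eq_iff hc0.ne', hb]
    ring
end

section
/- Let λ_c(β) = sup_{c ∈ (e^{-2/β}, 1)} 4βc²(-ln c)(1 + (1/2)β ln c) for β > 0. Then λ_c(β)/β → 2/e as β → 0⁺. -/
/-!
On the interval `(e^{-2/β}, 1)` the last factor `1 + β (ln c) / 2` lies in `(0, 1)`, and
`c² (-ln c) ≤ 1 / (2e)`, with equality at `c = e^{-1/2}`. Hence `λ_c(β) / β ≤ 2 / e`, while
evaluating at `c = e^{-1/2}` (admissible for `β < 4`) gives `λ_c(β) / β ≥ (2 / e) (1 - β / 4)`.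
The limit follows by squeezing.
-/

open Real Set Filter

/-- The critical heating parameter λ_c(β) for the voltage-controlled radial problem. -/
noncomputable def lambdaCrit (β : ℝ) : ℝ :=
  sSup ((fun c : ℝ => 4 * β * c ^ 2 * (-Real.log c) * (1 + β * Real.log c / 2)) ''
    Set.Ioo (Real.exp (-2 / β)) 1)

/-- The maximum of `c² (-ln c)` is `1 / (2e)`: with `x = -2 ln c` this is `x ≤ e^{x-1}`. -/
lemma sq_mul_neg_log_le {c : ℝ} (hc : 0 < c) :
    c ^ 2 * (-Real.log c) ≤ 1 / (2 * Real.exp 1) := by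
  have h := Real.add_one_le_exp (-2 * Real.log c - 1)
  have hexp : Real.exp (-2 * Real.log c - 1) = 1 / (c ^ 2 * Real.exp 1) := by
    rw [Real.exp_sub, show -2 * Real.log c = -(Real.log c + Real.log c) by ring, Real.exp_neg,
      Real.exp_add, Real.exp_log hc]
    field_simp
  rw [hexp] at h
  have he := Real.exp_pos 1
  rw [le_div_iff₀ (by positivity)] at h ⊢
  linarith

lemma objective_le {β c : ℝ} (hβ : 0 < β) (hc : c ∈ Set.Ioo (Real.exp (-2 / β)) 1) :
    4 * β * c ^ 2 * (-Real.log c) * (1 + β * Real.log c / 2) ≤ 2 / Real.exp 1 * β := by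
  have hc0 : 0 < c := (Real.exp_pos _).trans hc.1
  have hlog : Real.log c < 0 := Real.log_neg hc0 hc.2
  have hA : 0 ≤ 4 * β * c ^ 2 * (-Real.log c) :=
    mul_nonneg (by positivity) (by linarith)
  have hle : 1 + β * Real.log c / 2 ≤ 1 := by nlinarith
  calc 4 * β * c ^ 2 * (-Real.log c) * (1 + β * Real.log c / 2)
      ≤ 4 * β * c ^ 2 * (-Real.log c) := mul_le_of_le_one_right hA hle
    _ = 4 * β * (c ^ 2 * (-Real.log c)) := by ring
    _ ≤ 4 * β * (1 / (2 * Real.exp 1)) :=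
        mul_le_mul_of_nonneg_left (sq_mul_neg_log_le hc0) (by positivity)
    _ = 2 / Real.exp 1 * β := by field_simp; norm_num

lemma lambdaCrit_div_le {β : ℝ} (hβ : 0 < β) : lambdaCrit β / β ≤ 2 / Real.exp 1 := by
  rw [div_le_iff₀ hβ]
  refine Real.sSup_le ?_ (by positivity)
  rintro _ ⟨c, hc, rfl⟩
  exact objective_le hβ hc

lemma le_lambdaCrit_div {β : ℝ} (hβ : 0 < β) (hβ4 : β < 4) :
    2 / Real.exp 1 * (1 - β / 4) ≤ lambdaCrit β / β := by
  rw [le_div_iff₀ hβ]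
  refine le_csSup ⟨2 / Real.exp 1 * β, ?_⟩ ⟨Real.exp (-1 / 2), ⟨?_, ?_⟩, ?_⟩
  · rintro _ ⟨c, hc, rfl⟩
    exact objective_le hβ hc
  · rw [Real.exp_lt_exp, div_lt_iff₀ hβ]
    linarith
  · rw [Real.exp_lt_one_iff]
    norm_num
  · have hsq : Real.exp (-1 / 2) ^ 2 = (Real.exp 1)⁻¹ := by
      rw [← Real.exp_nat_mul, ← Real.exp_neg]
      norm_num
    simp only [hsq, Real.log_exp]
    ring

/-- λ_c(β)/β → 2/e as β → 0⁺. -/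
theorem lambdaCrit_small_beta :
    Filter.Tendsto (fun β : ℝ => lambdaCrit β / β) (nhdsWithin 0 (Set.Ioi 0))
      (nhds (2 / Real.exp 1)) := by
  have hlow : Filter.Tendsto (fun β : ℝ => 2 / Real.exp 1 * (1 - β / 4))
      (nhdsWithin 0 (Set.Ioi 0)) (nhds (2 / Real.exp 1)) := by
    have hcont : Continuous fun β : ℝ => 2 / Real.exp 1 * (1 - β / 4) := by fun_prop
    simpa using (hcont.tendsto 0).mono_left nhdsWithin_le_nhds
  refine tendsto_of_tendsto_of_tendsto_of_le_of_le' hlow tendsto_const_nhds ?_ ?_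
  · filter_upwards [Ioo_mem_nhdsGT (show (0 : ℝ) < 4 by norm_num)] with β hβ
    exact le_lambdaCrit_div hβ.1 hβ.2
  · filter_upwards [self_mem_nhdsWithin] with β hβ
    exact lambdaCrit_div_le hβ
end

section
/- For every β > 0, the map G_β(c) = 4β(-ln c)/(c²(1 + (1/2)β ln c)) is continuous and strictly decreasing on the interval (e^{-2/β}, 1), with G_β(c) → 0 as c → 1⁻ and G_β(c) → +∞ as c → (e^{-2/β})⁺; consequently, for every K > 0 there is exactly one c ∈ (e^{-2/β}, 1) with G_β(c) = K. -/
/-!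
On the interval, `-log c`, `c ^ 2` and `1 + β * log c / 2` are all positive, the first is strictly
decreasing and the other two strictly increasing in `c`, so the quotient `G` is strictly decreasing.
The numerator vanishes at `c = 1` while the denominator is `1` there; the denominator tends to `0⁺`
at `exp (-2 / β)` while the numerator tends to `8`. Existence for each `K` is then the intermediate
value theorem between the limits `0` and `+∞`, and uniqueness is strict monotonicity.
-/

open Real Set Filter

/-- For β > 0, G_β(c) = 4β(-ln c)/(c²(1 + (1/2)β ln c)) is continuous and
strictly decreasing on (e^{-2/β}, 1), with G_β(c) → 0 as c → 1⁻ and G_β(c) → +∞ as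
c → (e^{-2/β})⁺; hence for every K > 0 there is exactly one c in the interval with
G_β(c) = K. -/
theorem current_controlled_steady_state_parametrization (β : ℝ) (hβ : 0 < β)
    (G : ℝ → ℝ)
    (hG : ∀ c : ℝ, G c = 4 * β * (-Real.log c) / (c ^ 2 * (1 + β * Real.log c / 2))) :
    ContinuousOn G (Set.Ioo (Real.exp (-2 / β)) 1) ∧
    StrictAntiOn G (Set.Ioo (Real.exp (-2 / β)) 1) ∧
    Filter.Tendsto G (nhdsWithin 1 (Set.Iio 1)) (nhds 0) ∧
    Filter.Tendsto G (nhdsWithin (Real.exp (-2 / β)) (Set.Ioi (Real.exp (-2 / β))))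
      Filter.atTop ∧
    (∀ K : ℝ, 0 < K → ∃! c : ℝ, c ∈ Set.Ioo (Real.exp (-2 / β)) 1 ∧ G c = K) := by
  have hG' : G = fun c => 4 * β * (-Real.log c) / (c ^ 2 * (1 + β * Real.log c / 2)) := funext hG
  set a := Real.exp (-2 / β) with ha
  have ha0 : 0 < a := Real.exp_pos _
  have hloga : Real.log a = -2 / β := Real.log_exp _
  have ha1 : a < 1 := Real.exp_lt_one_iff.2 (div_neg_of_neg_of_pos (by norm_num) hβ)
  have hfac : ∀ c, a < c → 0 < 1 + β * Real.log c / 2 := by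
    intro c hc
    have h1 : -2 / β < Real.log c := hloga ▸ Real.log_lt_log ha0 hc
    rw [div_lt_iff₀ hβ] at h1
    linarith
  have hden : ∀ c, a < c → 0 < c ^ 2 * (1 + β * Real.log c / 2) := fun c hc =>
    mul_pos (pow_pos (ha0.trans hc) 2) (hfac c hc)
  have hnumc : ∀ c, 0 < c → ContinuousAt (fun c => 4 * β * (-Real.log c)) c := fun c hc =>
    continuousAt_const.mul (Real.continuousAt_log hc.ne').neg
  have hdenc : ∀ c, 0 < c → ContinuousAt (fun c => c ^ 2 * (1 + β * Real.log c / 2)) c :=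
    fun c hc => (continuousAt_id.pow 2).mul
      (continuousAt_const.add
        ((continuousAt_const.mul (Real.continuousAt_log hc.ne')).div_const 2))
  have hGc : ∀ c, a < c → ContinuousAt G c := by
    intro c hc
    rw [hG']
    exact (hnumc c (ha0.trans hc)).div (hdenc c (ha0.trans hc)) (hden c hc).ne'
  have hcont : ContinuousOn G (Set.Ioo a 1) := fun c hc => (hGc c hc.1).continuousWithinAt
  have hanti : StrictAntiOn G (Set.Ioo a 1) := by
    intro x hx y hy hxy
    have hx0 : 0 < x := ha0.trans hx.1
    have hlog : Real.log x < Real.log y := Real.log_lt_log hx0 hxy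
    have hlogy : Real.log y < 0 := Real.log_neg (ha0.trans hy.1) hy.2
    rw [hG x, hG y]
    have hnum : 4 * β * (-Real.log y) < 4 * β * (-Real.log x) :=
      mul_lt_mul_of_pos_left (by linarith) (by linarith)
    have hle : x ^ 2 * (1 + β * Real.log x / 2) ≤ y ^ 2 * (1 + β * Real.log y / 2) := by
      have := (hfac x hx.1).le
      gcongr
    exact div_lt_div₀ hnum hle
      (mul_nonneg (by linarith) (by linarith)) (hden x hx.1)
  have hlim1 : Filter.Tendsto G (nhdsWithin 1 (Set.Iio 1)) (nhds 0) := by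
    have h := (hGc 1 ha1).tendsto
    have h1 : G 1 = 0 := by simp [hG]
    rw [h1] at h
    exact h.mono_left nhdsWithin_le_nhds
  have hlima : Filter.Tendsto G (nhdsWithin a (Set.Ioi a)) Filter.atTop := by
    have hn : Filter.Tendsto (fun c => 4 * β * (-Real.log c)) (nhdsWithin a (Set.Ioi a))
        (nhds 8) := by
      have h := (hnumc a ha0).tendsto
      have h8 : 4 * β * (-Real.log a) = 8 := by rw [hloga]; field_simp; norm_num
      rw [h8] at h
      exact h.mono_left nhdsWithin_le_nhds
    have hd : Filter.Tendsto (fun c => c ^ 2 * (1 + β * Real.log c / 2))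
        (nhdsWithin a (Set.Ioi a)) (nhdsWithin 0 (Set.Ioi 0)) := by
      refine tendsto_nhdsWithin_iff.2 ⟨?_, ?_⟩
      · have h := (hdenc a ha0).tendsto
        have h0 : a ^ 2 * (1 + β * Real.log a / 2) = 0 := by rw [hloga]; field_simp; norm_num
        rw [h0] at h
        exact h.mono_left nhdsWithin_le_nhds
      · filter_upwards [self_mem_nhdsWithin] with c hc using hden c hc
    rw [hG']
    simp only [div_eq_mul_inv _ (_ ^ 2 * _)]
    exact hn.pos_mul_atTop (by norm_num) hd.inv_tendsto_nhdsGT_zero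
  refine ⟨hcont, hanti, hlim1, hlima, fun K hK => ?_⟩
  have hIVT := isPreconnected_Ioo.intermediate_value_Ioi
    (Filter.le_principal_iff.2 (Ioo_mem_nhdsLT ha1))
    (Filter.le_principal_iff.2 (Ioo_mem_nhdsGT ha1)) hcont hlim1 hlima
  obtain ⟨c, hc, hcK⟩ := hIVT hK
  exact ⟨c, ⟨hc, hcK⟩, fun d hd => hanti.injOn hd.1 hc (hd.2.trans hcK.symm)⟩
end

section
/- Let β > 0, c ∈ (e^{-2/β}, 1), b = (1/2)βc(-ln c), and K = 8b/((c - b)c²). Then the function θ(r) = -2 ln(c - b + b r²) satisfies the non-local equation θ''(r) + θ'(r)/r + K e^{θ(r)} / (4 (∫₀¹ e^{θ(s)} s ds)²) = 0 for all r ∈ (0,1), together with the Robin boundary condition θ'(1) = -β θ(1). -/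
open Real Set

/-!
Write `u r = c - b + b r²`, which is positive because `0 < b < c`, so that `exp θ = 1 / u²`.
Then `θ' = -4 b r / u` and `θ'' + θ' / r = -8 b (c - b) / u²`, while `s² / (2 (c - b) u s)` is an
antiderivative of `s / u²` and gives `∫₀¹ exp (θ s) s ds = 1 / (2 c (c - b))`. With the given `K`
the non-local term is therefore exactly `8 b (c - b) / u²`. The Robin condition is
`-4 b / c = 2 β log c`, which is the definition of `b`.
-/

/-- For β > 0, c ∈ (e^{-2/β}, 1), b = (1/2)βc(-ln c) and
K = 8b/((c-b)c²), the function θ(r) = -2 ln(c - b + b r²) satisfies the non-local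
equation θ'' + θ'/r + K e^θ / (4 (∫₀¹ e^θ s ds)²) = 0 on (0,1), with the Robin
boundary condition θ'(1) = -β θ(1). -/
theorem radial_steady_state_current
    (β c b K : ℝ) (hβ : 0 < β)
    (hc : c ∈ Set.Ioo (Real.exp (-2 / β)) 1)
    (hb : b = β * c * (-Real.log c) / 2)
    (hK : K = 8 * b / ((c - b) * c ^ 2))
    (θ : ℝ → ℝ) (hθ : ∀ r : ℝ, θ r = -2 * Real.log (c - b + b * r ^ 2)) :
    (∀ r ∈ Set.Ioo (0 : ℝ) 1,
      deriv (deriv θ) r + deriv θ r / r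
        + K * Real.exp (θ r) / (4 * (∫ s in (0:ℝ)..1, Real.exp (θ s) * s) ^ 2) = 0) ∧
    deriv θ 1 = -β * θ 1 := by
  obtain ⟨hc1, hc2⟩ := hc
  have hc0 : 0 < c := (Real.exp_pos _).trans hc1
  have hlog : Real.log c < 0 := Real.log_neg hc0 hc2
  have hb0 : 0 < b := by
    rw [hb]
    have : 0 < -Real.log c := by linarith
    positivity
  have hcb : 0 < c - b := by
    -- The bound `c > exp (-2 / β)` says `-β log c / 2 < 1`, that is, `b < c`.
    have h1 : -2 / β < Real.log c := (Real.lt_log_iff_exp_lt hc0).2 hc1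
    rw [div_lt_iff₀ hβ] at h1
    rw [hb]
    nlinarith [mul_pos hc0 (by linarith : 0 < Real.log c * β + 2)]
  have hu : ∀ r : ℝ, 0 < c - b + b * r ^ 2 := fun r => by positivity
  have hdu : ∀ r : ℝ, HasDerivAt (fun r => c - b + b * r ^ 2) (2 * b * r) r := fun r => by
    refine (((hasDerivAt_pow 2 r).const_mul b).const_add (c - b)).congr_deriv ?_
    push_cast
    ring
  have hd : deriv θ = fun r => -4 * b * r / (c - b + b * r ^ 2) := by
    funext r
    rw [funext hθ, (((hdu r).log (hu r).ne').const_mul (-2)).deriv]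
    ring
  have hd2 : ∀ r, deriv (deriv θ) r =
      (-4 * b * (c - b + b * r ^ 2) - -4 * b * r * (2 * b * r)) / (c - b + b * r ^ 2) ^ 2 := by
    intro r
    rw [hd]
    have h : HasDerivAt (fun r => -4 * b * r / (c - b + b * r ^ 2)) _ r :=
      ((hasDerivAt_id r).const_mul (-4 * b)).div (hdu r) (hu r).ne'
    rw [h.deriv, mul_one, id]
  have hexp : ∀ r, Real.exp (θ r) = 1 / (c - b + b * r ^ 2) ^ 2 := by
    intro r
    have : θ r = -Real.log ((c - b + b * r ^ 2) ^ 2) := by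
      rw [hθ, Real.log_pow]
      push_cast
      ring
    rw [this, Real.exp_neg, Real.exp_log (pow_pos (hu r) 2), one_div]
  have hint : ∫ s in (0:ℝ)..1, Real.exp (θ s) * s = 1 / (2 * c * (c - b)) := by
    simp_rw [hexp]
    have hF : ∀ s ∈ Set.uIcc (0:ℝ) 1,
        HasDerivAt (fun s => s ^ 2 / (c - b + b * s ^ 2) / (2 * (c - b)))
          (1 / (c - b + b * s ^ 2) ^ 2 * s) s := by
      intro s _
      have h := ((hasDerivAt_pow 2 s).div (hdu s) (hu s).ne').div_const (2 * (c - b))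
      refine h.congr_deriv ?_
      have h1 := (hu s).ne'
      have h2 := hcb.ne'
      push_cast
      field_simp
      ring
    have hcont : Continuous fun s : ℝ => 1 / (c - b + b * s ^ 2) ^ 2 * s :=
      (continuous_const.div (by fun_prop) fun s => (pow_pos (hu s) 2).ne').mul continuous_id
    rw [intervalIntegral.integral_eq_sub_of_hasDerivAt hF (hcont.intervalIntegrable 0 1)]
    have h2 := hcb.ne'
    simp only [one_pow, mul_one, sub_add_cancel]
    field_simp
    ring
  refine ⟨fun r hr => ?_, ?_⟩
  · have hr0 : r ≠ 0 := hr.1.ne'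
    have h1 := (hu r).ne'
    have h2 := hcb.ne'
    rw [hd2, hd, hexp, hint, hK]
    field_simp
    ring
  · rw [hd, hθ]
    simp only [one_pow, mul_one, sub_add_cancel]
    rw [hb]
    field_simp
    ring
end

section
/- Let α > 0, a ∈ (0, π), b = (2a/α) tan(a/2), and Λ = 8 e^{-b} sin²(a/2). Then the function θ(z) = 2 ln(cos(a z)/cos(a/2)) + b satisfies the non-local equation θ''(z) + Λ e^{-θ(z)} / (∫_{-1/2}^{1/2} e^{-θ(s)} ds)² = 0 for all z ∈ (-1/2, 1/2), together with the Robin boundary conditions θ'(1/2) = -α θ(1/2) and θ'(-1/2) = α θ(-1/2). -/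
open Real Set

/-!
Wherever `cos (a z) ≠ 0`, one has `θ' = -2 a tan (a z)`, hence `θ'' = -2 a² / cos² (a z)`. On
`[-1/2, 1/2]` the cosine is positive and `e^{-θ} = e^{-b} cos² (a/2) / cos² (a z)`, which has the
primitive `e^{-b} cos² (a/2) tan (a z) / a`, so its integral is
`2 e^{-b} sin (a/2) cos (a/2) / a`. The value of `Λ` is the one for which the source term is
`2 a² / cos² (a z)`, and the value of `b = θ (±1/2)` is the one for which the Robin conditions hold.
-/

lemma axial_cos_pos {a z : ℝ} (ha : a ∈ Ioo 0 π) (hz : z ∈ Icc (-(1:ℝ)/2) (1/2)) :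
    0 < cos (a * z) := by
  obtain ⟨h0, h1⟩ := ha
  obtain ⟨h2, h3⟩ := hz
  exact cos_pos_of_mem_Ioo ⟨by nlinarith, by nlinarith⟩

lemma hasDerivAt_tan_mul {a z : ℝ} (hz : cos (a * z) ≠ 0) :
    HasDerivAt (fun s => tan (a * s)) (a / cos (a * z) ^ 2) z := by
  have h := (hasDerivAt_tan hz).comp z ((hasDerivAt_id z).const_mul a)
  refine h.congr_deriv ?_
  simp; ring

lemma hasDerivAt_axial_profile {a b c z : ℝ} (hc : c ≠ 0) (hz : cos (a * z) ≠ 0) :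
    HasDerivAt (fun s => 2 * log (cos (a * s) / c) + b) (-2 * a * tan (a * z)) z := by
  have h1 : HasDerivAt (fun s => cos (a * s)) (-sin (a * z) * (a * 1)) z :=
    ((hasDerivAt_id z).const_mul a).cos
  refine ((((h1.div_const c).log (div_ne_zero hz hc)).const_mul 2).add_const b).congr_deriv ?_
  rw [tan_eq_sin_div_cos]
  field_simp

lemma exp_neg_axial_profile {b c x : ℝ} (hc : 0 < c) (hx : 0 < x) :
    exp (-(2 * log (x / c) + b)) = exp (-b) * c ^ 2 / x ^ 2 := by
  have h : exp (2 * log (x / c)) = (x / c) ^ 2 := by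
    rw [two_mul, exp_add, exp_log (div_pos hx hc), sq]
  rw [neg_add, exp_add, exp_neg (2 * log (x / c)), h]
  field_simp

lemma integral_axial_density {a K : ℝ} (ha : a ∈ Ioo 0 π) :
    ∫ s in (-(1:ℝ)/2)..(1/2), K / cos (a * s) ^ 2 = 2 * K * tan (a / 2) / a := by
  have ha0 : a ≠ 0 := ha.1.ne'
  have hI : uIcc (-(1:ℝ)/2) (1/2) = Icc (-(1:ℝ)/2) (1/2) := uIcc_of_le (by norm_num)
  have hne : ∀ s ∈ uIcc (-(1:ℝ)/2) (1/2), cos (a * s) ≠ 0 := fun s hs =>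
    (axial_cos_pos ha (hI ▸ hs)).ne'
  rw [intervalIntegral.integral_eq_sub_of_hasDerivAt (f := fun s => K / a * tan (a * s))]
  · have h1 : a * (-(1:ℝ)/2) = -(a / 2) := by ring
    have h2 : a * (1/2) = a / 2 := by ring
    simp only [h1, h2, tan_neg]
    ring
  · intro s hs
    refine ((hasDerivAt_tan_mul (hne s hs)).const_mul (K / a)).congr_deriv ?_
    have := hne s hs
    field_simp
  · apply ContinuousOn.intervalIntegrable
    exact ContinuousOn.div (by fun_prop) (by fun_prop) fun s hs => pow_ne_zero 2 (hne s hs)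

/-- For α > 0, a ∈ (0, π), b = (2a/α) tan(a/2), and
Λ = 8 e^{-b} sin²(a/2), the function θ(z) = 2 ln(cos(az)/cos(a/2)) + b satisfies the
non-local equation θ'' + Λ e^{-θ}/(∫_{-1/2}^{1/2} e^{-θ})² = 0 on (-1/2, 1/2), with
Robin conditions θ'(1/2) = -α θ(1/2) and θ'(-1/2) = α θ(-1/2). -/
theorem axial_steady_state_voltage (α a b Λ : ℝ) (hα : 0 < α)
    (ha : a ∈ Set.Ioo 0 Real.pi)
    (hb : b = (2 * a / α) * Real.tan (a / 2))
    (hΛ : Λ = 8 * Real.exp (-b) * Real.sin (a / 2) ^ 2)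
    (θ : ℝ → ℝ)
    (hθ : ∀ z : ℝ, θ z = 2 * Real.log (Real.cos (a * z) / Real.cos (a / 2)) + b) :
    (∀ z ∈ Set.Ioo (-(1:ℝ)/2) (1/2),
      deriv (deriv θ) z
        + Λ * Real.exp (-θ z) / (∫ s in (-(1:ℝ)/2)..(1/2), Real.exp (-θ s)) ^ 2 = 0) ∧
    deriv θ (1/2) = -α * θ (1/2) ∧
    deriv θ (-(1:ℝ)/2) = α * θ (-(1:ℝ)/2) := by
  have ha0 : 0 < a := ha.1
  have hC : 0 < cos (a / 2) := cos_pos_of_mem_Ioo ⟨by linarith [ha.2], by linarith [ha.2]⟩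
  have hS : 0 < sin (a / 2) := sin_pos_of_pos_of_lt_pi (by linarith) (by linarith [ha.2])
  have hθ' : θ = fun s => 2 * log (cos (a * s) / cos (a / 2)) + b := funext hθ
  have hd : ∀ z, cos (a * z) ≠ 0 → deriv θ z = -2 * a * tan (a * z) := fun z hz => by
    rw [hθ']
    exact (hasDerivAt_axial_profile hC.ne' hz).deriv
  have hexp : ∀ z ∈ Icc (-(1:ℝ)/2) (1/2),
      exp (-θ z) = exp (-b) * cos (a / 2) ^ 2 / cos (a * z) ^ 2 := fun z hz => by
    rw [hθ z]
    exact exp_neg_axial_profile hC (axial_cos_pos ha hz)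
  have h1 : a * (-(1:ℝ)/2) = -(a / 2) := by ring
  have h2 : a * (1/2) = a / 2 := by ring
  refine ⟨fun z hz => ?_, ?_, ?_⟩
  · have hcz := axial_cos_pos ha (Ioo_subset_Icc_self hz)
    -- The formula for `θ'` holds on a neighbourhood of `z`, so it can be differentiated there.
    have hev : deriv θ =ᶠ[nhds z] fun s => -2 * a * tan (a * s) := by
      have hcont : ContinuousAt (fun s => cos (a * s)) z := by fun_prop
      filter_upwards [hcont.eventually_ne hcz.ne'] with s hs using hd s hs
    have hdd : deriv (deriv θ) z = -2 * a * (a / cos (a * z) ^ 2) := by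
      rw [hev.deriv_eq]
      exact ((hasDerivAt_tan_mul hcz.ne').const_mul (-2 * a)).deriv
    have hint : ∫ s in (-(1:ℝ)/2)..(1/2), exp (-θ s)
        = 2 * (exp (-b) * cos (a / 2) ^ 2) * tan (a / 2) / a := by
      rw [← integral_axial_density ha]
      refine intervalIntegral.integral_congr fun s hs => hexp s ?_
      rwa [uIcc_of_le (by norm_num)] at hs
    rw [hdd, hint, hexp z (Ioo_subset_Icc_self hz), hΛ, tan_eq_sin_div_cos]
    have hE := exp_pos (-b)
    generalize exp (-b) = E at *
    field_simp
    ring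
  · rw [hd _ (by rw [h2]; exact hC.ne'), hθ, h2, div_self hC.ne', log_one, hb]
    field_simp
    ring
  · rw [hd _ (by rw [h1, cos_neg]; exact hC.ne'), hθ, h1, cos_neg, tan_neg, div_self hC.ne',
      log_one, hb]
    field_simp
    ring
end

section
/- For every α > 0, define H_α(a) = 8 e^{-(2a/α) tan(a/2)} sin²(a/2) on (0, π). Then H_α is continuous and strictly positive, H_α(a) → 0 as a → 0⁺ and as a → π⁻, and H_α attains a finite positive maximum Λ_c(α) at some interior point; moreover, for a given Λ > 0 the equation H_α(a) = Λ has a solution a ∈ (0, π) if and only if Λ ≤ Λ_c(α). -/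
/-!
The only non-elementary limit is at `π⁻`, where `tan (a / 2) → +∞` makes the exponential factor
vanish while `sin² (a / 2)` stays bounded. Everything about the maximum and the solvability of
`H a = Λ` is then a general fact about a positive continuous function on an open interval with
limit `0` at both ends (`exists_max_of_tendsto_zero`): extended by its limits it is continuous on
the closed interval, so it has a maximum there, which is positive and hence interior, and every
value in `(0, max]` is taken by the intermediate value theorem.
-/

open Real Set Filter

/-- The statement avoids the values of `f` at the endpoints, which are arbitrary: for the function
of the main theorem, the convention `tan (π / 2) = 0` gives a nonzero value at `π`. -/
lemma exists_max_of_tendsto_zero {f : ℝ → ℝ} {l r : ℝ} (hlr : l < r)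
    (hcont : ContinuousOn f (Ioo l r)) (hpos : ∀ x ∈ Ioo l r, 0 < f x)
    (hl : Tendsto f (nhdsWithin l (Ioi l)) (nhds 0))
    (hr : Tendsto f (nhdsWithin r (Iio r)) (nhds 0)) :
    ∃ x₀ ∈ Ioo l r, 0 < f x₀ ∧ (∀ x ∈ Ioo l r, f x ≤ f x₀) ∧
      ∀ y : ℝ, 0 < y → ((∃ x ∈ Ioo l r, f x = y) ↔ y ≤ f x₀) := by
  set g := extendFrom (Ioo l r) f
  have hg : ContinuousOn g (Icc l r) := continuousOn_Icc_extendFrom_Ioo hcont hl hr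
  have hgl : g l = 0 := eq_lim_at_left_extendFrom_Ioo hlr hl
  have hgr : g r = 0 := eq_lim_at_right_extendFrom_Ioo hlr hr
  have hgf : ∀ x ∈ Ioo l r, g x = f x := fun x hx =>
    extendFrom_extends hcont x hx
  obtain ⟨x₀, hx₀, hmax⟩ := isCompact_Icc.exists_isMaxOn (nonempty_Icc.2 hlr.le) hg
  have hle : ∀ x ∈ Icc l r, g x ≤ g x₀ := fun x hx => hmax hx
  -- A point of `[l, r]` at which `g` is positive is interior, since `g` vanishes at the ends.
  have hint : ∀ x ∈ Icc l r, 0 < g x → x ∈ Ioo l r := by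
    intro x hx hgx
    refine ⟨lt_of_le_of_ne hx.1 ?_, lt_of_le_of_ne hx.2 ?_⟩
    · rintro rfl
      exact hgx.ne' hgl
    · rintro rfl
      exact hgx.ne' hgr
  have hx₀pos : 0 < g x₀ := by
    obtain ⟨m, hm⟩ := nonempty_Ioo.2 hlr
    calc 0 < f m := hpos m hm
      _ = g m := (hgf m hm).symm
      _ ≤ g x₀ := hle m (Ioo_subset_Icc_self hm)
  have hx₀' := hint x₀ hx₀ hx₀pos
  have hfle : ∀ x ∈ Ioo l r, f x ≤ f x₀ := by
    intro x hx
    rw [← hgf x hx, ← hgf x₀ hx₀']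
    exact hle x (Ioo_subset_Icc_self hx)
  refine ⟨x₀, hx₀', hpos x₀ hx₀', hfle, fun y hy => ⟨?_, fun hyle => ?_⟩⟩
  · rintro ⟨x, hx, rfl⟩
    exact hfle x hx
  · have hsub : Icc l x₀ ⊆ Icc l r := Icc_subset_Icc_right hx₀.2
    obtain ⟨x, hx, hxy⟩ := intermediate_value_Icc hx₀.1 (hg.mono hsub)
      (show y ∈ Icc (g l) (g x₀) by
        rw [hgl, hgf x₀ hx₀']
        exact ⟨hy.le, hyle⟩)
    have hx' := hint x (hsub hx) (hxy ▸ hy)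
    exact ⟨x, hx', (hgf x hx').symm.trans hxy⟩

/-- For α > 0, H_α(a) = 8 e^{-(2a/α) tan(a/2)} sin²(a/2) is continuous and
strictly positive on (0, π), tends to 0 at both endpoints, attains a finite positive
maximum Λ_c(α) at an interior point, and for Λ > 0 the equation H_α(a) = Λ has a
solution a ∈ (0, π) iff Λ ≤ Λ_c(α). -/
theorem axial_critical_Lambda (α : ℝ) (hα : 0 < α)
    (H : ℝ → ℝ)
    (hH : ∀ a : ℝ,
      H a = 8 * Real.exp (-(2 * a / α) * Real.tan (a / 2)) * Real.sin (a / 2) ^ 2) :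
    ContinuousOn H (Set.Ioo 0 Real.pi) ∧
    (∀ a ∈ Set.Ioo 0 Real.pi, 0 < H a) ∧
    Filter.Tendsto H (nhdsWithin 0 (Set.Ioi 0)) (nhds 0) ∧
    Filter.Tendsto H (nhdsWithin Real.pi (Set.Iio Real.pi)) (nhds 0) ∧
    ∃ a₀ ∈ Set.Ioo 0 Real.pi,
      0 < H a₀ ∧
      (∀ a ∈ Set.Ioo 0 Real.pi, H a ≤ H a₀) ∧
      (∀ Λ : ℝ, 0 < Λ → ((∃ a ∈ Set.Ioo 0 Real.pi, H a = Λ) ↔ Λ ≤ H a₀)) := by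
  have hH' : H = fun a =>
      8 * Real.exp (-(2 * a / α) * Real.tan (a / 2)) * Real.sin (a / 2) ^ 2 := funext hH
  have hcontAt : ∀ a : ℝ, Real.cos (a / 2) ≠ 0 → ContinuousAt H a := by
    intro a ha
    have htan : ContinuousAt (fun x : ℝ => Real.tan (x / 2)) a :=
      ContinuousAt.comp (f := fun x : ℝ => x / 2) (Real.continuousAt_tan.2 ha) (by fun_prop)
    rw [hH']
    fun_prop
  have hcont : ContinuousOn H (Ioo 0 π) := fun a ha =>
    (hcontAt a (Real.cos_pos_of_mem_Ioo
      ⟨by linarith [ha.1, ha.2], by linarith [ha.2]⟩).ne').continuousWithinAt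
  have hpos : ∀ a ∈ Ioo 0 π, 0 < H a := by
    intro a ha
    have hsin : 0 < Real.sin (a / 2) :=
      Real.sin_pos_of_pos_of_lt_pi (by linarith [ha.1]) (by linarith [ha.1, ha.2])
    rw [hH]
    positivity
  have hzero : Tendsto H (nhdsWithin 0 (Ioi 0)) (nhds 0) := by
    have h := (hcontAt 0 (by simp)).tendsto
    rw [show H 0 = 0 by simp [hH]] at h
    exact h.mono_left nhdsWithin_le_nhds
  have hpi : Tendsto H (nhdsWithin π (Iio π)) (nhds 0) := by
    have hhalf : Tendsto (fun a : ℝ => a / 2) (nhdsWithin π (Iio π))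
        (nhdsWithin (π / 2) (Iio (π / 2))) := by
      refine tendsto_nhdsWithin_iff.2 ⟨?_, ?_⟩
      · exact ((continuous_id.div_const 2).tendsto π).mono_left nhdsWithin_le_nhds
      · filter_upwards [self_mem_nhdsWithin] with a ha
        have ha2 : a < π := ha
        show a / 2 < π / 2
        linarith
    have htan := Real.tendsto_tan_pi_div_two.comp hhalf
    have hcoef : Tendsto (fun a : ℝ => -(2 * a / α)) (nhdsWithin π (Iio π))
        (nhds (-(2 * π / α))) :=
      (Continuous.tendsto (by fun_prop) π).mono_left nhdsWithin_le_nhds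
    have hneg : -(2 * π / α) < 0 := by
      have := Real.pi_pos
      rw [neg_lt_zero]
      positivity
    have hexp := Real.tendsto_exp_atBot.comp (hcoef.neg_mul_atTop hneg htan)
    have hsin : Tendsto (fun a : ℝ => Real.sin (a / 2) ^ 2) (nhdsWithin π (Iio π))
        (nhds (Real.sin (π / 2) ^ 2)) :=
      (Continuous.tendsto (by fun_prop) π).mono_left nhdsWithin_le_nhds
    have h := (hexp.const_mul 8).mul hsin
    rw [mul_zero, zero_mul] at h
    rw [hH']
    exact h
  exact ⟨hcont, hpos, hzero, hpi,
    exists_max_of_tendsto_zero Real.pi_pos hcont hpos hzero hpi⟩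
end

section
/- Let Λ_c(α) = sup_{a ∈ (0, π)} 8 e^{-(2a/α) tan(a/2)} sin²(a/2) for α > 0. Then Λ_c(α) < 8 for every α > 0, and Λ_c(α) → 8 as α → ∞. -/
/-!
Call `8 exp (-(2a/α) tan (a/2)) sin² (a/2)` the profile at `a`.
For `a ≤ π/2` one has `sin² (a/2) ≤ 1/2`, so the profile is at most `4`; for `a ≥ π/2` one has
`tan (a/2) ≥ 1`, so the profile is at most `8 exp (-π/α)`. Hence
`Λ_c(α) ≤ max 4 (8 exp (-π/α)) < 8`. For the limit it remains to bound `Λ_c` from below: given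
`b < 8`, fix `a < π` with `8 sin² (a/2) > b`; for this fixed `a` the profile tends to
`8 sin² (a/2)` as `α → ∞`, so `Λ_c(α) > b` eventually.
-/

open Real Set Filter

/-- The critical heating parameter Λ_c(α) for the voltage-controlled axial problem. -/
noncomputable def LambdaCrit (α : ℝ) : ℝ :=
  sSup ((fun a : ℝ => 8 * Real.exp (-(2 * a / α) * Real.tan (a / 2)) *
    Real.sin (a / 2) ^ 2) '' Set.Ioo 0 Real.pi)

/-- A bound uniform in `a`, from splitting `(0, π)` at `π/2`. -/
lemma profile_le {α a : ℝ} (hα : 0 < α) (ha : a ∈ Set.Ioo 0 Real.pi) :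
    8 * Real.exp (-(2 * a / α) * Real.tan (a / 2)) * Real.sin (a / 2) ^ 2 ≤
      max 4 (8 * Real.exp (-(Real.pi / α))) := by
  obtain ⟨h0, hpi⟩ := ha
  have hsq : Real.sin (a / 2) ^ 2 = 1 / 2 - Real.cos a / 2 := by
    rw [Real.sin_sq_eq_half_sub]
    ring_nf
  rcases le_total a (Real.pi / 2) with h | h
  · refine le_max_of_le_left ?_
    have hcos : 0 ≤ Real.cos a := Real.cos_nonneg_of_mem_Icc ⟨by linarith, h⟩
    have htan : 0 ≤ Real.tan (a / 2) :=
      Real.tan_nonneg_of_nonneg_of_le_pi_div_two (by linarith) (by linarith)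
    have hexp : Real.exp (-(2 * a / α) * Real.tan (a / 2)) ≤ 1 := by
      rw [Real.exp_le_one_iff, neg_mul]
      have : 0 ≤ 2 * a / α * Real.tan (a / 2) := by positivity
      linarith
    nlinarith [Real.exp_pos (-(2 * a / α) * Real.tan (a / 2)), sq_nonneg (Real.sin (a / 2))]
  · refine le_max_of_le_right ?_
    have htan : 1 ≤ Real.tan (a / 2) := by
      rw [← Real.tan_pi_div_four]
      exact Real.strictMonoOn_tan.monotoneOn ⟨by linarith, by linarith⟩
        ⟨by linarith, by linarith⟩ (by linarith)
    have hdiv : Real.pi / α ≤ 2 * a / α := by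
      gcongr
      linarith
    have hexp : Real.exp (-(2 * a / α) * Real.tan (a / 2)) ≤ Real.exp (-(Real.pi / α)) := by
      rw [Real.exp_le_exp]
      have : 0 ≤ 2 * a / α := by positivity
      nlinarith
    have hs : Real.sin (a / 2) ^ 2 ≤ 1 := Real.sin_sq_le_one _
    nlinarith [Real.exp_pos (-(2 * a / α) * Real.tan (a / 2))]

lemma LambdaCrit_lt {α : ℝ} (hα : 0 < α) : LambdaCrit α < 8 := by
  refine lt_of_le_of_lt (csSup_le ((Set.nonempty_Ioo.2 Real.pi_pos).image _) ?_)
    (b := max 4 (8 * Real.exp (-(Real.pi / α)))) ?_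
  · rintro _ ⟨a, ha, rfl⟩
    exact profile_le hα ha
  · have : Real.exp (-(Real.pi / α)) < 1 := by
      rw [Real.exp_lt_one_iff]
      have : 0 < Real.pi / α := by positivity
      linarith
    exact max_lt (by norm_num) (by linarith)

lemma profile_le_LambdaCrit {α a : ℝ} (hα : 0 < α) (ha : a ∈ Set.Ioo 0 Real.pi) :
    8 * Real.exp (-(2 * a / α) * Real.tan (a / 2)) * Real.sin (a / 2) ^ 2 ≤ LambdaCrit α := by
  refine le_csSup ⟨max 4 (8 * Real.exp (-(Real.pi / α))), ?_⟩ ⟨a, ha, rfl⟩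
  rintro _ ⟨x, hx, rfl⟩
  exact profile_le hα hx

lemma exists_lt_profile_limit {b : ℝ} (hb : b < 8) :
    ∃ a ∈ Set.Ioo 0 Real.pi, b < 8 * Real.sin (a / 2) ^ 2 := by
  have hc : Continuous fun a : ℝ => 8 * Real.sin (a / 2) ^ 2 := by fun_prop
  have hev : ∀ᶠ a in nhdsWithin Real.pi (Set.Iio Real.pi), b < 8 * Real.sin (a / 2) ^ 2 :=
    nhdsWithin_le_nhds (hc.continuousAt.eventually (lt_mem_nhds (by simpa using hb)))
  obtain ⟨a, h1, h2⟩ := (hev.and (Ioo_mem_nhdsLT Real.pi_pos)).exists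
  exact ⟨a, h2, h1⟩

lemma tendsto_profile (a : ℝ) :
    Filter.Tendsto
      (fun α : ℝ => 8 * Real.exp (-(2 * a / α) * Real.tan (a / 2)) * Real.sin (a / 2) ^ 2)
      Filter.atTop (nhds (8 * Real.sin (a / 2) ^ 2)) := by
  have h : Filter.Tendsto (fun α : ℝ => 2 * a / α) Filter.atTop (nhds 0) :=
    tendsto_const_nhds.div_atTop Filter.tendsto_id
  have h2 := (((h.neg.mul_const (Real.tan (a / 2))).rexp).const_mul 8).mul_const
    (Real.sin (a / 2) ^ 2)
  simpa using h2

/-- Λ_c(α) < 8 for every α > 0, and Λ_c(α) → 8 as α → ∞. -/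
theorem LambdaCrit_large_alpha :
    (∀ α : ℝ, 0 < α → LambdaCrit α < 8) ∧
    Filter.Tendsto LambdaCrit Filter.atTop (nhds 8) := by
  refine ⟨fun α hα => LambdaCrit_lt hα, tendsto_order.2 ⟨fun b hb => ?_, fun b hb => ?_⟩⟩
  · obtain ⟨a, ha, hab⟩ := exists_lt_profile_limit hb
    filter_upwards [(tendsto_profile a).eventually (lt_mem_nhds hab),
      Filter.eventually_gt_atTop 0] with α h hα
    exact h.trans_le (profile_le_LambdaCrit hα ha)
  · filter_upwards [Filter.eventually_gt_atTop 0] with α hα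
    exact (LambdaCrit_lt hα).trans hb
end

section
/- Let Λ_c(α) = sup_{a ∈ (0, π)} 8 e^{-(2a/α) tan(a/2)} sin²(a/2) for α > 0. Then Λ_c(α)/α → 2/e as α → 0⁺. -/
/-!
Write `f α a` for the function under the supremum. Since `sin (a/2) ≤ a/2 ≤ tan (a/2)` on `(0, π)`,
with `x = a²/α` one has `f α a ≤ 2 α x e^{-x} ≤ 2 α / e`, so `Λ_c(α) / α ≤ 2 / e` for every `α > 0`
(`heating_le`). The bound is asymptotically attained at `x = 1`, that is `a = √α`: since
`tan (s/2) / s` and `sin (s/2) / s` tend to `1/2` as `s → 0`, `f (s²) s / s² → 8 e^{-1} / 4 = 2 / e`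
(`tendsto_heating`). The limit follows by squeezing.
-/

open Real Set Filter

/-- The upper bound comes from `sin (a/2) ≤ a/2 ≤ tan (a/2)` and `x e^{-x} ≤ e^{-1}` at
`x = a²/α`. -/
lemma heating_le {α a : ℝ} (hα : 0 < α) (ha : a ∈ Set.Ioo 0 Real.pi) :
    8 * Real.exp (-(2 * a / α) * Real.tan (a / 2)) * Real.sin (a / 2) ^ 2
      ≤ 2 / Real.exp 1 * α := by
  obtain ⟨h0, hpi⟩ := ha
  have ht : a / 2 ≤ Real.tan (a / 2) := Real.le_tan (by linarith) (by linarith)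
  have hs : Real.sin (a / 2) ≤ a / 2 := Real.sin_le (by linarith)
  have hs0 : 0 ≤ Real.sin (a / 2) :=
    Real.sin_nonneg_of_nonneg_of_le_pi (by linarith) (by linarith)
  have he : -(2 * a / α) * Real.tan (a / 2) ≤ -(a ^ 2 / α) := by
    have h1 : 2 * a / α * (a / 2) ≤ 2 * a / α * Real.tan (a / 2) :=
      mul_le_mul_of_nonneg_left ht (by positivity)
    have h2 : 2 * a / α * (a / 2) = a ^ 2 / α := by ring
    linarith
  have hx : a ^ 2 / α * Real.exp (-(a ^ 2 / α)) ≤ Real.exp (-1) := by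
    have h1 := Real.add_one_le_exp (a ^ 2 / α - 1)
    calc a ^ 2 / α * Real.exp (-(a ^ 2 / α))
        ≤ Real.exp (a ^ 2 / α - 1) * Real.exp (-(a ^ 2 / α)) := by
          gcongr
          linarith
      _ = Real.exp (-1) := by
          rw [← Real.exp_add]
          congr 1
          ring
  calc 8 * Real.exp (-(2 * a / α) * Real.tan (a / 2)) * Real.sin (a / 2) ^ 2
      ≤ 8 * Real.exp (-(a ^ 2 / α)) * (a / 2) ^ 2 := by gcongr
    _ = 2 * α * (a ^ 2 / α * Real.exp (-(a ^ 2 / α))) := by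
        field_simp
        ring
    _ ≤ 2 * α * Real.exp (-1) := by gcongr
    _ = 2 / Real.exp 1 * α := by
        rw [Real.exp_neg]
        ring

/-- The value at the near-optimal point `a = s`, `α = s²`, rescaled by `1/α`. -/
lemma tendsto_heating :
    Filter.Tendsto (fun s : ℝ => 8 * Real.exp (-2 * (s⁻¹ * Real.tan (s / 2))) *
      (s⁻¹ * Real.sin (s / 2)) ^ 2) (nhdsWithin 0 {0}ᶜ) (nhds (2 / Real.exp 1)) := by
  have hd : HasDerivAt (fun s : ℝ => s / 2) (1 / 2) 0 := (hasDerivAt_id (0 : ℝ)).div_const 2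
  have hs : Filter.Tendsto (fun s : ℝ => s⁻¹ * Real.sin (s / 2)) (nhdsWithin 0 {0}ᶜ)
      (nhds (1 / 2)) := by
    have h : HasDerivAt (fun s : ℝ => Real.sin (s / 2)) (1 / 2) 0 := by
      simpa using hd.sin
    simpa using hasDerivAt_iff_tendsto_slope_zero.1 h
  have ht : Filter.Tendsto (fun s : ℝ => s⁻¹ * Real.tan (s / 2)) (nhdsWithin 0 {0}ᶜ)
      (nhds (1 / 2)) := by
    have h : HasDerivAt (fun s : ℝ => Real.tan (s / 2)) (1 / 2) 0 := by
      have h1 : HasDerivAt Real.tan (1 / Real.cos ((0 : ℝ) / 2) ^ 2) ((0 : ℝ) / 2) :=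
        Real.hasDerivAt_tan (by simp)
      simpa [Function.comp_def] using h1.comp (0 : ℝ) hd
    simpa using hasDerivAt_iff_tendsto_slope_zero.1 h
  have h := ((Real.continuous_exp.tendsto _).comp (ht.const_mul (-2))).const_mul 8
    |>.mul (hs.pow 2)
  have hl : 8 * Real.exp (-2 * (1 / 2)) * (1 / 2) ^ 2 = 2 / Real.exp 1 := by
    rw [show (-2 * (1 / 2) : ℝ) = -1 by norm_num, Real.exp_neg]
    ring
  rw [hl] at h
  exact h

/-- Λ_c(α)/α → 2/e as α → 0⁺. -/
theorem LambdaCrit_small_alpha :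
    Filter.Tendsto (fun α : ℝ => LambdaCrit α / α) (nhdsWithin 0 (Set.Ioi 0))
      (nhds (2 / Real.exp 1)) := by
  have hsqrt : Filter.Tendsto Real.sqrt (nhdsWithin 0 (Set.Ioi 0)) (nhdsWithin 0 {0}ᶜ) := by
    refine tendsto_nhdsWithin_iff.2 ⟨?_, ?_⟩
    · have h := Real.continuous_sqrt.tendsto 0
      rw [Real.sqrt_zero] at h
      exact h.mono_left nhdsWithin_le_nhds
    · filter_upwards [self_mem_nhdsWithin] with α hα
      exact (Real.sqrt_pos.2 hα).ne'
  refine tendsto_of_tendsto_of_tendsto_of_le_of_le' (tendsto_heating.comp hsqrt)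
    tendsto_const_nhds ?_ ?_
  · have hlt : ∀ᶠ α : ℝ in nhdsWithin 0 (Set.Ioi 0), α < 1 :=
      nhdsWithin_le_nhds (Iio_mem_nhds one_pos)
    filter_upwards [self_mem_nhdsWithin, hlt] with α hα hα1
    have hα : 0 < α := hα
    have hs : 0 < √α := Real.sqrt_pos.2 hα
    have hs1 : √α < Real.pi := by
      have : √α ≤ 1 := Real.sqrt_le_one.2 hα1.le
      linarith [Real.pi_gt_three]
    rw [le_div_iff₀ hα]
    refine le_trans (le_of_eq ?_) (le_csSup ⟨2 / Real.exp 1 * α, ?_⟩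
      (Set.mem_image_of_mem _ (⟨hs, hs1⟩ : √α ∈ Set.Ioo 0 Real.pi)))
    · have hsq : √α ^ 2 = α := Real.sq_sqrt hα.le
      have h1 : -2 * ((√α)⁻¹ * Real.tan (√α / 2)) = -(2 * √α / α) * Real.tan (√α / 2) := by
        have : √α / α = (√α)⁻¹ := by
          nth_rewrite 2 [← hsq]
          field_simp
        rw [← this]
        ring
      simp only [Function.comp_apply]
      rw [h1, mul_pow, inv_pow, hsq]
      field_simp
    · rintro _ ⟨a, ha, rfl⟩
      exact heating_le hα ha
  · filter_upwards [self_mem_nhdsWithin] with α hα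
    have hα : 0 < α := hα
    rw [div_le_iff₀ hα]
    refine csSup_le ((Set.nonempty_Ioo.2 Real.pi_pos).image _) ?_
    rintro _ ⟨a, ha, rfl⟩
    exact heating_le hα ha
end

section
/- For every α > 0, the map J_α(a) = 2a² e^{(2a/α) tan(a/2)} / cos²(a/2) is continuous and strictly increasing on (0, π), with J_α(a) → 0 as a → 0⁺ and J_α(a) → +∞ as a → π⁻; consequently, for every M > 0 there is exactly one a ∈ (0, π) with J_α(a) = M. -/
/-!
On `(0, π)` the factors `a ^ 2`, `tan (a / 2)` and `1 / cos (a / 2) ^ 2` are positive and strictly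
increasing, hence so is `J`. The formula for `J` is continuous on all of `(-π, π)` and vanishes at
`0`, which gives the limit at `0⁺`; for `1 < a < π` the exponential is at least `1`, so
`J a ≥ 1 / cos (a / 2) ^ 2`, which blows up at `π⁻`. The intermediate value theorem gives a
solution of `J a = M`, and strict monotonicity makes it unique.
-/

open Real Set Filter

/-- For α > 0, J_α(a) = 2a² e^{(2a/α) tan(a/2)} / cos²(a/2) is continuous
and strictly increasing on (0, π), with J_α(a) → 0 as a → 0⁺ and J_α(a) → +∞ as
a → π⁻; hence for every M > 0 there is exactly one a ∈ (0, π) with J_α(a) = M. -/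
theorem axial_current_controlled_parametrization (α : ℝ) (hα : 0 < α)
    (J : ℝ → ℝ)
    (hJ : ∀ a : ℝ,
      J a = 2 * a ^ 2 * Real.exp ((2 * a / α) * Real.tan (a / 2)) /
        Real.cos (a / 2) ^ 2) :
    ContinuousOn J (Set.Ioo 0 Real.pi) ∧
    StrictMonoOn J (Set.Ioo 0 Real.pi) ∧
    Filter.Tendsto J (nhdsWithin 0 (Set.Ioi 0)) (nhds 0) ∧
    Filter.Tendsto J (nhdsWithin Real.pi (Set.Iio Real.pi)) Filter.atTop ∧
    (∀ M : ℝ, 0 < M → ∃! a : ℝ, a ∈ Set.Ioo 0 Real.pi ∧ J a = M) := by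
  have hcos : ∀ a ∈ Set.Ioo (-Real.pi) Real.pi, 0 < Real.cos (a / 2) := fun a ha =>
    Real.cos_pos_of_mem_Ioo ⟨by linarith [ha.1], by linarith [ha.2]⟩
  have hcosI : ∀ a ∈ Set.Ioo 0 Real.pi, 0 < Real.cos (a / 2) := fun a ha =>
    hcos a ⟨by linarith [ha.1, ha.2], ha.2⟩
  have hJeq : J = fun a : ℝ => 2 * a ^ 2 * Real.exp ((2 * a / α) * Real.tan (a / 2)) /
        Real.cos (a / 2) ^ 2 := funext hJ
  have hcontAt : ∀ a ∈ Set.Ioo (-Real.pi) Real.pi, ContinuousAt J a := by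
    intro a ha
    have hc := (hcos a ha).ne'
    have ht : ContinuousAt (fun x : ℝ => Real.tan (x / 2)) a :=
      ContinuousAt.comp (f := fun x : ℝ => x / 2) (Real.continuousAt_tan.2 hc) (by fun_prop)
    rw [hJeq]
    exact ContinuousAt.div (by fun_prop) (by fun_prop) (pow_ne_zero 2 hc)
  have hcont : ContinuousOn J (Set.Ioo 0 Real.pi) := fun a ha =>
    (hcontAt a ⟨by linarith [ha.1, ha.2], ha.2⟩).continuousWithinAt
  have hmono : StrictMonoOn J (Set.Ioo 0 Real.pi) := by
    intro a ha b hb hab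
    have ha0 : 0 < a := ha.1
    have hb0 : 0 < b := hb.1
    have hbπ : b < Real.pi := hb.2
    have hcb := hcosI b hb
    have hcab : Real.cos (b / 2) < Real.cos (a / 2) :=
      Real.cos_lt_cos_of_nonneg_of_le_pi (by linarith) (by linarith) (by linarith)
    have htan : Real.tan (a / 2) < Real.tan (b / 2) :=
      Real.tan_lt_tan_of_nonneg_of_lt_pi_div_two (by linarith) (by linarith) (by linarith)
    have hta : 0 < Real.tan (a / 2) :=
      Real.tan_pos_of_pos_of_lt_pi_div_two (by linarith) (by linarith)
    rw [hJ, hJ]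
    gcongr
  have hzero : Filter.Tendsto J (nhdsWithin 0 (Set.Ioi 0)) (nhds 0) := by
    have h := (hcontAt 0 ⟨by linarith [Real.pi_pos], Real.pi_pos⟩).tendsto
    have hJ0 : J 0 = 0 := by simp [hJ]
    rw [hJ0] at h
    exact h.mono_left nhdsWithin_le_nhds
  have htop : Filter.Tendsto J (nhdsWithin Real.pi (Set.Iio Real.pi)) Filter.atTop := by
    have hnear : ∀ᶠ a in nhdsWithin Real.pi (Set.Iio Real.pi), a ∈ Set.Ioo 1 Real.pi :=
      Ioo_mem_nhdsLT (by linarith [Real.pi_gt_three])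
    have hden : Filter.Tendsto (fun a : ℝ => Real.cos (a / 2) ^ 2)
        (nhdsWithin Real.pi (Set.Iio Real.pi)) (nhdsWithin 0 (Set.Ioi 0)) := by
      refine tendsto_nhdsWithin_iff.2 ⟨?_, ?_⟩
      · have h : Continuous fun a : ℝ => Real.cos (a / 2) ^ 2 := by fun_prop
        have h' := h.tendsto Real.pi
        simp only [Real.cos_pi_div_two] at h'
        norm_num at h'
        exact h'.mono_left nhdsWithin_le_nhds
      · filter_upwards [hnear] with a ha
        have := hcosI a ⟨by linarith [ha.1], ha.2⟩
        exact pow_pos this 2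
    refine Filter.tendsto_atTop_mono' _ ?_ (tendsto_inv_nhdsGT_zero.comp hden)
    filter_upwards [hnear] with a ha
    have ha1 : 1 < a := ha.1
    have haπ : a < Real.pi := ha.2
    have hc := hcosI a ⟨by linarith, haπ⟩
    have hta : 0 < Real.tan (a / 2) :=
      Real.tan_pos_of_pos_of_lt_pi_div_two (by linarith) (by linarith)
    have he : 1 ≤ Real.exp ((2 * a / α) * Real.tan (a / 2)) :=
      Real.one_le_exp (by positivity)
    rw [hJ, Function.comp_apply, inv_eq_one_div]
    gcongr
    nlinarith
  refine ⟨hcont, hmono, hzero, htop, fun M hM => ?_⟩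
  obtain ⟨a, ha, haM⟩ := isPreconnected_Ioo.intermediate_value_Ioi
    (le_principal_iff.2 (Ioo_mem_nhdsGT Real.pi_pos))
    (le_principal_iff.2 (Ioo_mem_nhdsLT Real.pi_pos)) hcont hzero htop hM
  exact ⟨a, ⟨ha, haM⟩, fun b hb => hmono.injOn hb.1 ha (hb.2.trans haM.symm)⟩
end
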